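/- arXiv:1604.04071 — 2 statements merged into one kernel-verified Lean document; each statement's English description precedes it below -/
import Mathlib

section
/- Let U be a connected open subset of ℂ with U ≠ ℂ. If U is holomorphically simply connected, then U (with the subspace topology) is simply connected as a topological space; in particular U is homeomorphic to the open unit disc. -/
/-- An open set `U ⊆ ℂ` is *holomorphically simply connected* if every
holomorphic function on `U` has a holomorphic antiderivative on `U`. -/
def HolSC (U : Set ℂ) : Prop :=
  ∀ f : ℂ → ℂ, DifferentiableOn ℂ f U →
    ∃ F : ℂ → ℂ, DifferentiableOn ℂ F U ∧ ∀ z ∈ U, HasDerivAt F (f z) z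

/-!
Koebe's proof of the Riemann mapping theorem. Integrating `g' / g` shows that a nowhere vanishing
holomorphic function `g` on `U` has a holomorphic square root, and a square root of `z - a` with
`a ∉ U` leads to a univalent map of `U` into the disc. Fix distinct `z₀`, `z₁` in `U`. By the
theorems of Montel and Hurwitz, some `f` maximizes `‖f z₁‖` among the univalent maps into the disc
with `f z₀ = 0`. Up to automorphisms of the disc, a map that omits a value has a square root, which
is again univalent; as squaring strictly decreases the pseudohyperbolic distance, this square root
beats the original map. Hence the maximizer is onto.
-/

open Set Metric Filter Topology

open scoped ComplexConjugate

section Montel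

theorem tendstoLocallyUniformlyOn_of_equicontinuousOn {ι X α : Type*} [TopologicalSpace X]
    [LocallyCompactSpace X] [UniformSpace α] {F : ι → X → α} {g : X → α} {s : Set X} {φ : Filter ι}
    (hs : IsOpen s) (hF : EquicontinuousOn F s) (hlim : ∀ x ∈ s, Tendsto (F · x) φ (𝓝 (g x))) :
    TendstoLocallyUniformlyOn F g φ s := by
  rw [tendstoLocallyUniformlyOn_iff_forall_isCompact hs]
  intro K hKs hK
  have hK_lim : Tendsto (UniformOnFun.ofFun {K} ∘ F) φ (𝓝 (UniformOnFun.ofFun {K} g)) :=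
    (EquicontinuousOn.tendsto_uniformOnFun_iff_pi' (by simpa using hK)
      (by simpa using hF.mono hKs) φ g).2 <|
      tendsto_pi_nhds.2 fun ⟨x, hx⟩ ↦ hlim x (hKs (by simpa using hx))
  exact UniformOnFun.tendsto_iff_tendstoUniformlyOn.1 hK_lim K rfl

variable {ι E G : Type*} [NormedAddCommGroup E] [NormedSpace ℂ E] [NormedAddCommGroup G]
  [NormedSpace ℂ G] {F : ι → E → G} {U : Set E}

theorem equicontinuousAt_of_differentiableOn_of_bounded {x : E} {C : ℝ} (hU : U ∈ 𝓝 x)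
    (hF : ∀ i, DifferentiableOn ℂ (F i) U) (hC : ∀ᶠ y in 𝓝 x, ∀ i, ‖F i y‖ ≤ C) :
    EquicontinuousAt F x := by
  obtain ⟨r, hr, hball⟩ := Metric.mem_nhds_iff.1 (inter_mem hU hC)
  have hmaps : ∀ i, MapsTo (F i) (ball x r) (closedBall (F i x) (C + C)) := fun i y hy ↦
    mem_closedBall.2 <| (dist_le_norm_add_norm _ _).trans <|
      add_le_add ((hball hy).2 i) ((hball (mem_ball_self hr)).2 i)
  refine equicontinuousAt_of_continuity_modulus (fun y ↦ (C + C) / r * dist y x) ?_ F ?_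
  · exact Continuous.tendsto' (by fun_prop) _ _ (by simp)
  · filter_upwards [ball_mem_nhds x hr] with y hy i
    rw [dist_comm]
    exact Complex.dist_le_div_mul_dist_of_mapsTo_ball
      ((hF i).mono fun _ hw ↦ (hball hw).1) (hmaps i) hy

/-- The ultrafilter replaces the passage to a subsequence in **Montel's theorem**. -/
theorem exists_tendstoLocallyUniformlyOn_of_locally_bounded [LocallyCompactSpace E] [ProperSpace G]
    (φ : Ultrafilter ι) (hU : IsOpen U) (hF : ∀ i, DifferentiableOn ℂ (F i) U)
    (hbdd : ∀ x ∈ U, ∃ C : ℝ, ∀ᶠ y in 𝓝 x, ∀ i, ‖F i y‖ ≤ C) :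
    ∃ g : E → G, TendstoLocallyUniformlyOn F g φ U := by
  have hpt : ∀ x ∈ U, ∃ c, Tendsto (F · x) φ (𝓝 c) := by
    intro x hx
    obtain ⟨C, hC⟩ := hbdd x hx
    have hmem : ∀ᶠ i in (φ : Filter ι), F i x ∈ closedBall (0 : G) C :=
      .of_forall fun i ↦ mem_closedBall_zero_iff.2 (hC.self_of_nhds i)
    obtain ⟨c, -, hc⟩ := (isCompact_closedBall (0 : G) C).ultrafilter_le_nhds (φ.map (F · x))
      (le_principal_iff.2 hmem)
    exact ⟨c, hc⟩
  choose! g hg using hpt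
  have hequi : EquicontinuousOn F U := by
    intro x hx
    obtain ⟨C, hC⟩ := hbdd x hx
    have := equicontinuousAt_of_differentiableOn_of_bounded (hU.mem_nhds hx) hF hC
    exact this.equicontinuousWithinAt U
  exact ⟨g, tendstoLocallyUniformlyOn_of_equicontinuousOn hU hequi hg⟩

end Montel

section Hurwitz

theorem eventually_ne_of_analyticOnNhd_of_isPreconnected {𝕜 E : Type*} [NontriviallyNormedField 𝕜]
    [NormedAddCommGroup E] [NormedSpace 𝕜 E] {f : 𝕜 → E} {s : Set 𝕜} {a w : 𝕜} {c : E}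
    (hf : AnalyticOnNhd 𝕜 f s) (hs : IsPreconnected s) (ha : a ∈ s) (hw : w ∈ s) (hne : f w ≠ c) :
    ∀ᶠ z in 𝓝[≠] a, f z ≠ c :=
  ((hf a ha).eventually_eq_or_eventually_ne analyticAt_const).resolve_left fun h ↦
    hne (hf.eqOn_of_preconnected_of_eventuallyEq analyticOnNhd_const hs ha h hw)

theorem ball_subset_image_closedBall_of_le_norm_sub {f : ℂ → ℂ} {U : Set ℂ} {a : ℂ} {r m : ℝ}
    (hU : IsOpen U) (hf : DifferentiableOn ℂ f U) (hr : 0 < r) (hrU : closedBall a r ⊆ U)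
    (hm : 0 < m) (hsphere : ∀ z ∈ sphere a r, m ≤ ‖f z - f a‖) :
    ball (f a) (m / 2) ⊆ f '' closedBall a r := by
  obtain ⟨w, hw⟩ : (sphere a r).Nonempty := NormedSpace.sphere_nonempty.2 hr.le
  have hwa : f w ≠ f a := sub_ne_zero.1 (norm_pos_iff.1 (hm.trans_le (hsphere w hw)))
  have hiso : ∀ᶠ z in 𝓝[≠] a, f z ≠ f a := eventually_ne_of_analyticOnNhd_of_isPreconnected
    ((hf.analyticOnNhd hU).mono hrU) (convex_closedBall a r).isPreconnected
    (mem_closedBall_self hr.le) (sphere_subset_closedBall hw) hwa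
  have hdiff : DiffContOnCl ℂ f (ball a r) :=
    (hf.mono (closure_ball_subset_closedBall.trans hrU)).diffContOnCl
  exact hdiff.ball_subset_image_closedBall hr hsphere
    (hiso.frequently.filter_mono nhdsWithin_le_nhds)

variable {ι : Type*} {φ : Filter ι} [φ.NeBot] {F : ι → ℂ → ℂ} {g : ℂ → ℂ} {U : Set ℂ}

/-- **Hurwitz's theorem**, with the value allowed to vary along the filter. -/
theorem eventually_mem_image_of_tendstoLocallyUniformlyOn {V : Set ℂ} {a : ℂ}
    (hlim : TendstoLocallyUniformlyOn F g φ U) (hU : IsOpen U)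
    (hF : ∀ᶠ n in φ, DifferentiableOn ℂ (F n) U) (ha : a ∈ U) (hV : V ∈ 𝓝 a)
    (hg : ∀ᶠ z in 𝓝[≠] a, g z ≠ g a) : ∀ᶠ p in φ ×ˢ 𝓝 (g a), p.2 ∈ F p.1 '' V := by
  obtain ⟨r, hr, hball⟩ : ∃ r > 0, closedBall a r ⊆ {z | z ∈ U ∧ z ∈ V ∧ (z ≠ a → g z ≠ g a)} :=
    nhds_basis_closedBall.mem_iff.1 <| (hU.eventually_mem ha).and <|
      (eventually_mem_set.2 hV).and (eventually_nhdsWithin_iff.1 hg)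
  have hballU : closedBall a r ⊆ U := fun z hz ↦ (hball hz).1
  have hg_cont : ContinuousOn g (sphere a r) :=
    (hlim.differentiableOn hF hU).continuousOn.mono (sphere_subset_closedBall.trans hballU)
  obtain ⟨w, hw, hmin⟩ := (isCompact_sphere a r).exists_isMinOn
    (NormedSpace.sphere_nonempty.2 hr.le) (f := fun z ↦ dist (g z) (g a)) (by fun_prop)
  set m := dist (g w) (g a)
  have hm : 0 < m :=
    dist_pos.2 ((hball (sphere_subset_closedBall hw)).2.2 (ne_of_mem_sphere hw hr.ne'))
  have hunif := (tendstoLocallyUniformlyOn_iff_forall_isCompact hU).1 hlim _ hballU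
    (isCompact_closedBall a r)
  filter_upwards [((Metric.tendstoUniformlyOn_iff.1 hunif (m / 8) (by positivity)).and hF).prod_mk
    (ball_mem_nhds (g a) (show 0 < m / 8 by positivity))]
  rintro ⟨n, v⟩ ⟨⟨hn, hFn⟩, hv : dist v (g a) < m / 8⟩
  have hna := hn a (mem_closedBall_self hr.le)
  have hsphere : ∀ z ∈ sphere a r, m / 2 ≤ ‖F n z - F n a‖ := by
    intro z hz
    have hmz : m ≤ dist (g z) (g a) := hmin hz
    have hnz := hn z (sphere_subset_closedBall hz)
    have htri := dist_triangle4_right (g z) (g a) (F n z) (F n a)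
    rw [← dist_eq_norm]
    linarith
  refine image_mono (fun z hz ↦ (hball hz).2.1) <|
    ball_subset_image_closedBall_of_le_norm_sub hU hFn hr hballU (half_pos hm) hsphere ?_
  exact mem_ball.2 (by linarith [dist_triangle v (g a) (F n a)])

theorem injOn_of_tendstoLocallyUniformlyOn (hlim : TendstoLocallyUniformlyOn F g φ U)
    (hUo : IsOpen U) (hUc : IsPreconnected U) (hF : ∀ᶠ n in φ, DifferentiableOn ℂ (F n) U)
    (hinj : ∃ᶠ n in φ, InjOn (F n) U) (hg : ¬∃ c, ∀ z ∈ U, g z = c) : InjOn g U := by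
  intro a ha b hb hab
  by_contra hne
  obtain ⟨w, hw, hwa⟩ : ∃ w ∈ U, g w ≠ g a := by
    by_contra! h
    exact hg ⟨g a, h⟩
  have hiso : ∀ᶠ z in 𝓝[≠] a, g z ≠ g a := eventually_ne_of_analyticOnNhd_of_isPreconnected
    ((hlim.differentiableOn hF hUo).analyticOnNhd hUo) hUc ha hw hwa
  have hb_lim : Tendsto (fun n ↦ (n, F n b)) φ (φ ×ˢ 𝓝 (g a)) :=
    tendsto_id.prodMk (hab ▸ hlim.tendsto_at hb)
  have himage := hb_lim.eventually <| eventually_mem_image_of_tendstoLocallyUniformlyOn hlim hUo hF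
    ha (inter_mem (hUo.mem_nhds ha) (isOpen_ne.mem_nhds hne)) hiso
  obtain ⟨n, hn, z, ⟨hzU, hzb⟩, hz⟩ := (hinj.and_eventually himage).exists
  exact hzb (hn hzU hb hz)

end Hurwitz

section OpenMapping

variable {U : Set ℂ} {f : ℂ → ℂ}

theorem isOpen_image_of_differentiableOn_of_injOn (hU : IsOpen U) (hf : DifferentiableOn ℂ f U)
    (hinj : InjOn f U) : IsOpen (f '' U) := by
  rw [isOpen_iff_mem_nhds]
  rintro _ ⟨x, hx, rfl⟩
  refine ((hf.analyticOnNhd hU x hx).eventually_constant_or_nhds_le_map_nhds).resolve_left ?_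
    (image_mem_map (hU.mem_nhds hx))
  intro hconst
  obtain ⟨y, ⟨hy, hyU⟩, hyx⟩ :=
    ((eventually_nhdsWithin_of_eventually_nhds (s := {x}ᶜ)
      (hconst.and (hU.eventually_mem hx))).and self_mem_nhdsWithin).exists
  exact hyx (hinj hyU hx hy)

theorem isOpenEmbedding_domRestrict_of_injOn (hU : IsOpen U) (hf : DifferentiableOn ℂ f U)
    (hinj : InjOn f U) : IsOpenEmbedding (U.domRestrict f) := by
  refine .of_continuous_injective_isOpenMap hf.continuousOn.domRestrict hinj.injective fun s hs ↦ ?_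
  have hsU : ((↑) '' s : Set ℂ) ⊆ U := Subtype.coe_image_subset U s
  have := isOpen_image_of_differentiableOn_of_injOn (hU.isOpenMap_subtype_val s hs) (hf.mono hsU)
    (hinj.mono hsU)
  rwa [image_image] at this

end OpenMapping

/-- The Blaschke factor with zero `a`. For `‖a‖ < 1` it is an automorphism of the open unit disc,
and `‖blaschkeFactor a z‖` is the pseudohyperbolic distance between `a` and `z`. -/
noncomputable def blaschkeFactor (a z : ℂ) : ℂ := (z - a) / (1 - conj a * z)

namespace blaschkeFactor

variable {a z : ℂ}

@[simp]
theorem self_apply (a : ℂ) : blaschkeFactor a a = 0 := by simp [blaschkeFactor]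

@[simp]
theorem apply_zero (a : ℂ) : blaschkeFactor a 0 = -a := by simp [blaschkeFactor]

theorem denom_ne_zero (ha : ‖a‖ < 1) (hz : ‖z‖ < 1) : 1 - conj a * z ≠ 0 := by
  intro h
  have hnorm : ‖a‖ * ‖z‖ = 1 := by
    rw [← RCLike.norm_conj a, ← norm_mul, ← sub_eq_zero.1 h, norm_one]
  exact (mul_lt_one_of_nonneg_of_lt_one_left (norm_nonneg a) ha hz.le).ne hnorm

theorem eq_zero_iff (ha : ‖a‖ < 1) (hz : ‖z‖ < 1) : blaschkeFactor a z = 0 ↔ z = a := by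
  simp [blaschkeFactor, denom_ne_zero ha hz, sub_eq_zero]

theorem norm_denom_sq_sub_norm_num_sq (a z : ℂ) :
    ‖1 - conj a * z‖ ^ 2 - ‖z - a‖ ^ 2 = (1 - ‖a‖ ^ 2) * (1 - ‖z‖ ^ 2) := by
  simp only [← Complex.normSq_eq_norm_sq, Complex.normSq_apply, Complex.sub_re, Complex.sub_im,
    Complex.mul_re, Complex.mul_im, Complex.conj_re, Complex.conj_im, Complex.one_re,
    Complex.one_im]
  ring

theorem norm_lt_one (ha : ‖a‖ < 1) (hz : ‖z‖ < 1) : ‖blaschkeFactor a z‖ < 1 := by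
  have hpos : 0 < (1 - ‖a‖ ^ 2) * (1 - ‖z‖ ^ 2) := by
    rw [← sq_lt_one_iff₀ (norm_nonneg _)] at ha hz
    exact mul_pos (sub_pos.2 ha) (sub_pos.2 hz)
  rw [blaschkeFactor, norm_div, div_lt_one (norm_pos_iff.2 (denom_ne_zero ha hz)),
    ← sq_lt_sq₀ (norm_nonneg _) (norm_nonneg _), ← sub_pos, norm_denom_sq_sub_norm_num_sq]
  exact hpos

theorem mapsTo_ball (ha : ‖a‖ < 1) : MapsTo (blaschkeFactor a) (ball 0 1) (ball 0 1) := by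
  simpa [MapsTo] using fun z ↦ norm_lt_one (z := z) ha

theorem neg_apply_apply (ha : ‖a‖ < 1) (hz : ‖z‖ < 1) :
    blaschkeFactor (-a) (blaschkeFactor a z) = z := by
  have hz' := denom_ne_zero ha hz
  have ha' := denom_ne_zero ha ha
  have hnum : blaschkeFactor a z - -a = z * (1 - conj a * a) / (1 - conj a * z) := by
    rw [blaschkeFactor, eq_div_iff hz', sub_mul, div_mul_cancel₀ _ hz']
    ring
  have hden : 1 - conj (-a) * blaschkeFactor a z = (1 - conj a * a) / (1 - conj a * z) := by
    rw [blaschkeFactor, eq_div_iff hz', sub_mul, mul_assoc, div_mul_cancel₀ _ hz', map_neg]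
    ring
  rw [blaschkeFactor, hnum, hden, div_div_div_cancel_right₀ hz', mul_div_cancel_right₀ _ ha']

theorem leftInvOn_neg (ha : ‖a‖ < 1) :
    LeftInvOn (blaschkeFactor (-a)) (blaschkeFactor a) (ball 0 1) := fun _ hz ↦
  neg_apply_apply ha (mem_ball_zero_iff.1 hz)

theorem differentiableOn (ha : ‖a‖ < 1) : DifferentiableOn ℂ (blaschkeFactor a) (ball 0 1) :=
  (differentiableOn_id.sub_const a).div ((differentiableOn_id.const_mul _).const_sub 1)
    fun _ hz ↦ denom_ne_zero ha (mem_ball_zero_iff.1 hz)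

theorem sq_apply_sq (a z : ℂ) :
    blaschkeFactor (a ^ 2) (z ^ 2) = blaschkeFactor a z * blaschkeFactor (-a) z := by
  simp only [blaschkeFactor, div_mul_div_comm, map_pow, map_neg]
  congr 1 <;> ring

theorem norm_sq_apply_sq_lt (ha : ‖a‖ < 1) (hz : ‖z‖ < 1) (hza : z ≠ a) :
    ‖blaschkeFactor (a ^ 2) (z ^ 2)‖ < ‖blaschkeFactor a z‖ := by
  rw [sq_apply_sq, norm_mul]
  exact mul_lt_of_lt_one_right (norm_pos_iff.2 ((eq_zero_iff ha hz).not.2 hza))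
    (norm_lt_one ((norm_neg a).trans_lt ha) hz)

end blaschkeFactor

/-- Every nowhere vanishing holomorphic function on `U` has a holomorphic square root on `U`. -/
def HasHolomorphicSqrts (U : Set ℂ) : Prop :=
  ∀ g : ℂ → ℂ, DifferentiableOn ℂ g U → (∀ z ∈ U, g z ≠ 0) →
    ∃ s : ℂ → ℂ, DifferentiableOn ℂ s U ∧ ∀ z ∈ U, s z ^ 2 = g z

theorem HolSC.exists_exp_eq {U : Set ℂ} (hU : HolSC U) (hUo : IsOpen U) (hUc : IsPreconnected U)
    {g : ℂ → ℂ} (hg : DifferentiableOn ℂ g U) (hg0 : ∀ z ∈ U, g z ≠ 0) :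
    ∃ l : ℂ → ℂ, DifferentiableOn ℂ l U ∧ ∀ z ∈ U, Complex.exp (l z) = g z := by
  obtain ⟨F, hFd, hF⟩ := hU (fun z ↦ deriv g z / g z) ((hg.deriv hUo).div hg hg0)
  have hder : ∀ z ∈ U, HasDerivAt (fun z ↦ g z * Complex.exp (-F z)) 0 z := by
    intro z hz
    convert! (hg.differentiableAt (hUo.mem_nhds hz)).hasDerivAt.mul (hF z hz).neg.cexp using 1
    field_simp [hg0 z hz]
    ring
  obtain ⟨c, hc⟩ := hUo.exists_is_const_of_deriv_eq_zero hUc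
    (fun z hz ↦ (hder z hz).differentiableAt.differentiableWithinAt) fun z hz ↦ (hder z hz).deriv
  refine ⟨fun z ↦ F z + Complex.log c, hFd.add_const _, fun z hz ↦ ?_⟩
  have hc0 : c ≠ 0 := hc z hz ▸ mul_ne_zero (hg0 z hz) (Complex.exp_ne_zero _)
  calc Complex.exp (F z + Complex.log c)
      = Complex.exp (F z) * (g z * Complex.exp (-F z)) := by
        rw [Complex.exp_add, Complex.exp_log hc0, hc z hz]
    _ = g z := by rw [mul_left_comm, ← Complex.exp_add, add_neg_cancel, Complex.exp_zero, mul_one]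

theorem HolSC.hasHolomorphicSqrts {U : Set ℂ} (hU : HolSC U) (hUo : IsOpen U)
    (hUc : IsPreconnected U) : HasHolomorphicSqrts U := by
  intro g hg hg0
  obtain ⟨l, hl, hexp⟩ := hU.exists_exp_eq hUo hUc hg hg0
  refine ⟨fun z ↦ Complex.exp (l z / 2), (hl.div_const 2).cexp, fun z hz ↦ ?_⟩
  rw [← Complex.exp_nat_mul, Nat.cast_ofNat, mul_div_cancel₀ _ two_ne_zero, hexp z hz]

/-- `f` is a univalent (injective holomorphic) map of `U` into the open unit disc; the competitors
in the extremal problem are those with `f z₀ = 0`. -/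
structure IsUnivalentDiscMap (f : ℂ → ℂ) (U : Set ℂ) : Prop where
  differentiableOn : DifferentiableOn ℂ f U
  mapsTo : MapsTo f U (ball 0 1)
  injOn : InjOn f U

namespace IsUnivalentDiscMap

variable {U : Set ℂ} {f : ℂ → ℂ} {z₀ z₁ : ℂ}

theorem norm_lt_one (hf : IsUnivalentDiscMap f U) {z : ℂ} (hz : z ∈ U) : ‖f z‖ < 1 :=
  mem_ball_zero_iff.1 (hf.mapsTo hz)

theorem blaschkeFactor_comp (hf : IsUnivalentDiscMap f U) {a : ℂ} (ha : ‖a‖ < 1) :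
    IsUnivalentDiscMap (blaschkeFactor a ∘ f) U where
  differentiableOn := (blaschkeFactor.differentiableOn ha).comp hf.differentiableOn hf.mapsTo
  mapsTo := (blaschkeFactor.mapsTo_ball ha).comp hf.mapsTo
  injOn := (blaschkeFactor.leftInvOn_neg ha).injOn.comp hf.injOn hf.mapsTo

theorem of_sq_eqOn {s : ℂ → ℂ} (hf : IsUnivalentDiscMap f U) (hs : DifferentiableOn ℂ s U)
    (hsq : ∀ z ∈ U, s z ^ 2 = f z) : IsUnivalentDiscMap s U where
  differentiableOn := hs
  mapsTo z hz := by
    rw [mem_ball_zero_iff, ← sq_lt_one_iff₀ (norm_nonneg _), ← norm_pow, hsq z hz]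
    exact hf.norm_lt_one hz
  injOn := .of_comp (g := (· ^ 2)) (hf.injOn.congr fun z hz ↦ (hsq z hz).symm)

theorem of_tendstoLocallyUniformlyOn {ι : Type*} {φ : Filter ι} [φ.NeBot] {F : ι → ℂ → ℂ}
    (hF : ∀ n, IsUnivalentDiscMap (F n) U) (hlim : TendstoLocallyUniformlyOn F f φ U)
    (hUo : IsOpen U) (hUc : IsPreconnected U) (hf : ¬∃ c, ∀ z ∈ U, f z = c) :
    IsUnivalentDiscMap f U := by
  have hFd : ∀ᶠ n in φ, DifferentiableOn ℂ (F n) U := .of_forall fun n ↦ (hF n).differentiableOn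
  have hfd : DifferentiableOn ℂ f U := hlim.differentiableOn hFd hUo
  have hinj : InjOn f U := injOn_of_tendstoLocallyUniformlyOn hlim hUo hUc hFd
    (Eventually.of_forall fun n ↦ (hF n).injOn).frequently hf
  have hclosed : MapsTo f U (closedBall 0 1) := fun z hz ↦
    isClosed_closedBall.mem_of_tendsto (hlim.tendsto_at hz)
      (.of_forall fun n ↦ ball_subset_closedBall ((hF n).mapsTo hz))
  refine ⟨hfd, ?_, hinj⟩
  rw [← interior_closedBall (0 : ℂ) one_ne_zero, mapsTo_iff_image_subset]
  exact interior_maximal hclosed.image_subset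
    (isOpen_image_of_differentiableOn_of_injOn hUo hfd hinj)

theorem exists_maximal_norm (hex : ∃ f, IsUnivalentDiscMap f U) (hUo : IsOpen U)
    (hUc : IsPreconnected U) (hz₀ : z₀ ∈ U) (hz₁ : z₁ ∈ U) (hne : z₁ ≠ z₀) :
    ∃ f, IsUnivalentDiscMap f U ∧ f z₀ = 0 ∧
      ∀ h, IsUnivalentDiscMap h U → h z₀ = 0 → ‖h z₁‖ ≤ ‖f z₁‖ := by
  set S : Set (ℂ → ℂ) := {f | IsUnivalentDiscMap f U ∧ f z₀ = 0}
  obtain ⟨f₀, hf₀⟩ : S.Nonempty := by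
    obtain ⟨f, hf⟩ := hex
    exact ⟨_, hf.blaschkeFactor_comp (hf.norm_lt_one hz₀), blaschkeFactor.self_apply _⟩
  have hbdd : BddAbove ((fun f ↦ ‖f z₁‖) '' S) :=
    ⟨1, forall_mem_image.2 fun f hf ↦ (hf.1.norm_lt_one hz₁).le⟩
  obtain ⟨u, -, hu, huS⟩ := exists_seq_tendsto_sSup ⟨_, mem_image_of_mem _ hf₀⟩ hbdd
  choose F hF hFu using huS
  obtain ⟨g, hlim⟩ := exists_tendstoLocallyUniformlyOn_of_locally_bounded (hyperfilter ℕ) hUo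
    (fun n ↦ (hF n).1.differentiableOn) fun z hz ↦
      ⟨1, (hUo.eventually_mem hz).mono fun w hw n ↦ ((hF n).1.norm_lt_one hw).le⟩
  have hgz₀ : g z₀ = 0 :=
    tendsto_nhds_unique (hlim.tendsto_at hz₀) (by simp [(hF _).2])
  have hgz₁ : ‖g z₁‖ = sSup ((fun f ↦ ‖f z₁‖) '' S) :=
    tendsto_nhds_unique (hlim.tendsto_at hz₁).norm
      (by simpa only [hFu] using hu.mono_left Nat.hyperfilter_le_atTop)
  have hmax : ∀ h ∈ S, ‖h z₁‖ ≤ ‖g z₁‖ := fun h hh ↦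
    hgz₁ ▸ le_csSup hbdd (mem_image_of_mem _ hh)
  have hg_nonconst : ¬∃ c, ∀ z ∈ U, g z = c := by
    rintro ⟨c, hc⟩
    have hf₀z₁ : f₀ z₁ = 0 := norm_le_zero_iff.1 <| (hmax f₀ hf₀).trans_eq <| by
      rw [hc z₁ hz₁, ← hc z₀ hz₀, hgz₀, norm_zero]
    exact hne (hf₀.1.injOn hz₁ hz₀ (hf₀z₁.trans hf₀.2.symm))
  exact ⟨g, of_tendstoLocallyUniformlyOn (fun n ↦ (hF n).1) hlim hUo hUc hg_nonconst, hgz₀,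
    fun h hh hhz₀ ↦ hmax h ⟨hh, hhz₀⟩⟩

theorem exists_norm_lt_of_not_surjOn (hf : IsUnivalentDiscMap f U) (hU : HasHolomorphicSqrts U)
    (hz₀ : z₀ ∈ U) (hz₁ : z₁ ∈ U) (hne : z₁ ≠ z₀) (hfz₀ : f z₀ = 0)
    (hsurj : ¬SurjOn f U (ball 0 1)) :
    ∃ h, IsUnivalentDiscMap h U ∧ h z₀ = 0 ∧ ‖f z₁‖ < ‖h z₁‖ := by
  obtain ⟨w, hw, hwf⟩ := not_subset.1 hsurj
  rw [mem_ball_zero_iff] at hw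
  have hg := hf.blaschkeFactor_comp hw
  obtain ⟨s, hsd, hsq⟩ := hU _ hg.differentiableOn fun z hz h ↦
    hwf ⟨z, hz, (blaschkeFactor.eq_zero_iff hw (hf.norm_lt_one hz)).1 h⟩
  have hs := hg.of_sq_eqOn hsd hsq
  have hsz₀ : s z₀ ^ 2 = -w := by simp [hsq z₀ hz₀, hfz₀]
  refine ⟨blaschkeFactor (s z₀) ∘ s, hs.blaschkeFactor_comp (hs.norm_lt_one hz₀),
    blaschkeFactor.self_apply _, ?_⟩
  calc ‖f z₁‖ = ‖blaschkeFactor (-w) (blaschkeFactor w (f z₁))‖ := by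
        rw [blaschkeFactor.neg_apply_apply hw (hf.norm_lt_one hz₁)]
    _ = ‖blaschkeFactor (s z₀ ^ 2) (s z₁ ^ 2)‖ := by rw [hsz₀, hsq z₁ hz₁, Function.comp_apply]
    _ < ‖blaschkeFactor (s z₀) (s z₁)‖ := blaschkeFactor.norm_sq_apply_sq_lt
        (hs.norm_lt_one hz₀) (hs.norm_lt_one hz₁) (hs.injOn.ne hz₁ hz₀ hne)

theorem of_image_avoids_closedBall {s : ℂ → ℂ} {c : ℂ} {r : ℝ} (hr : 0 < r)
    (hs : DifferentiableOn ℂ s U) (hinj : InjOn s U) (hfar : ∀ z ∈ U, r < ‖s z - c‖) :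
    IsUnivalentDiscMap (fun z ↦ r / (s z - c)) U where
  differentiableOn := (differentiableOn_const _).div (hs.sub_const c) fun z hz ↦
    norm_pos_iff.1 (hr.trans (hfar z hz))
  mapsTo z hz := by
    rw [mem_ball_zero_iff, norm_div, Complex.norm_of_nonneg hr.le,
      div_lt_one (hr.trans (hfar z hz))]
    exact hfar z hz
  injOn z hz w hw h := hinj hz hw <| by
    simpa [div_eq_mul_inv, hr.ne'] using h

end IsUnivalentDiscMap

namespace HasHolomorphicSqrts

variable {U : Set ℂ}

theorem exists_injOn_image_avoids_closedBall (hU : HasHolomorphicSqrts U) (hUo : IsOpen U)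
    (hUne : U ≠ univ) (hUnonempty : U.Nonempty) :
    ∃ s : ℂ → ℂ, DifferentiableOn ℂ s U ∧ InjOn s U ∧ ∃ c, ∃ r > 0, ∀ z ∈ U, r < ‖s z - c‖ := by
  obtain ⟨a, ha⟩ := (ne_univ_iff_exists_notMem U).1 hUne
  have hne : ∀ z ∈ U, z - a ≠ 0 := fun z hz ↦ sub_ne_zero.2 (ne_of_mem_of_not_mem hz ha)
  obtain ⟨s, hs, hsq⟩ := hU (· - a) (differentiableOn_id.sub_const a) hne
  have hs_sq_inj : ∀ z ∈ U, ∀ w ∈ U, s z ^ 2 = s w ^ 2 → z = w := by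
    intro z hz w hw h
    rwa [hsq z hz, hsq w hw, sub_left_inj] at h
  have hinj : InjOn s U := fun z hz w hw h ↦ hs_sq_inj z hz w hw (congrArg (· ^ 2) h)
  obtain ⟨z₀, hz₀⟩ := hUnonempty
  obtain ⟨r, hr, hball⟩ := nhds_basis_closedBall.mem_iff.1 <|
    (isOpen_image_of_differentiableOn_of_injOn hUo hs hinj).mem_nhds (mem_image_of_mem s hz₀)
  refine ⟨s, hs, hinj, -s z₀, r, hr, fun z hz ↦ ?_⟩
  by_contra! h
  obtain ⟨w, hw, hwz⟩ := hball (show -s z ∈ closedBall (s z₀) r by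
    rwa [mem_closedBall_iff_norm, ← neg_add', norm_neg, ← sub_neg_eq_add])
  obtain rfl : w = z := hs_sq_inj w hw z hz (by rw [hwz, neg_sq])
  exact hne w hw (by rw [← hsq w hw, self_eq_neg.1 hwz, zero_pow two_ne_zero])

theorem exists_isUnivalentDiscMap_image_eq_ball (hU : HasHolomorphicSqrts U) (hUo : IsOpen U)
    (hUc : IsConnected U) (hUne : U ≠ univ) :
    ∃ f, IsUnivalentDiscMap f U ∧ f '' U = ball 0 1 := by
  obtain ⟨s, hs, hinj, c, r, hr, hfar⟩ :=
    hU.exists_injOn_image_avoids_closedBall hUo hUne hUc.nonempty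
  obtain ⟨z₀, hz₀⟩ := hUc.nonempty
  obtain ⟨z₁, hz₁, hne⟩ := (infinite_of_mem_nhds z₀ (hUo.mem_nhds hz₀)).nontrivial.exists_ne z₀
  obtain ⟨f, hf, hfz₀, hmax⟩ := IsUnivalentDiscMap.exists_maximal_norm
    ⟨_, .of_image_avoids_closedBall hr hs hinj hfar⟩ hUo hUc.isPreconnected hz₀ hz₁ hne
  refine ⟨f, hf, SurjOn.image_eq_of_mapsTo ?_ hf.mapsTo⟩
  by_contra hsurj
  obtain ⟨h, hh, hhz₀, hlt⟩ := hf.exists_norm_lt_of_not_surjOn hU hz₀ hz₁ hne hfz₀ hsurj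
  exact (hmax h hh hhz₀).not_gt hlt

end HasHolomorphicSqrts

/-- A connected open proper subset of `ℂ` that is holomorphically simply connected
is simply connected as a topological space; in particular it is homeomorphic to
the open unit disc. -/
theorem holSC_implies_simplyConnected (U : Set ℂ) (hUopen : IsOpen U)
    (hUconn : IsConnected U) (hUne : U ≠ Set.univ) (hU : HolSC U) :
    SimplyConnectedSpace U ∧ Nonempty (U ≃ₜ (Metric.ball (0 : ℂ) 1)) := by
  obtain ⟨f, hf, himage⟩ := (hU.hasHolomorphicSqrts hUopen
    hUconn.isPreconnected).exists_isUnivalentDiscMap_image_eq_ball hUopen hUconn hUne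
  have hemb := isOpenEmbedding_domRestrict_of_injOn hUopen hf.differentiableOn hf.injOn
  have e : U ≃ₜ ball (0 : ℂ) 1 := hemb.toIsEmbedding.toHomeomorph.trans
    (.setCongr ((range_domRestrict f U).trans himage))
  have : ContractibleSpace (ball (0 : ℂ) 1) := contractibleSpace_ball one_pos
  exact ⟨e.toHomotopyEquiv.simplyConnectedSpace, ⟨e⟩⟩
end

section
/- Let U be a bounded connected open subset of ℂ that is holomorphically simply connected, and let q be a boundary point of U. Then there exists a holomorphic function ψ on U such that Re ψ(z) < 0 for all z ∈ U and Re ψ(z) → 0 as z → q within U (i.e., for every sequence z_j in U converging to q, Re ψ(z_j) → 0). In particular, Re ψ is a weak barrier for U at q. -/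
open Filter Topology

/-!
Scale `z - q` to a function `g` with values in the punctured unit disc. The antiderivative of
`g' / g`, corrected by a locally constant function, is a logarithm `L` of `g`. Then
`Re L = log ‖g‖` is negative and tends to `-∞` at `q`, so `1 / L` maps into the left half-plane
and tends to `0` at `q`.
-/

theorem differentiableOn_comp_of_deriv_eq_zero {𝕜 G H : Type*} [RCLike 𝕜]
    [NormedAddCommGroup G] [NormedSpace 𝕜 G] [NormedAddCommGroup H] [NormedSpace 𝕜 H]
    {s : Set 𝕜} {f : 𝕜 → G} (hs : IsOpen s) (hf : DifferentiableOn 𝕜 f s)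
    (hf' : s.EqOn (deriv f) 0) (φ : G → H) : DifferentiableOn 𝕜 (fun x ↦ φ (f x)) s := by
  intro x hx
  have fiber_mem_nhds : s ∩ f ⁻¹' {f x} ∈ 𝓝 x :=
    (hs.isOpen_inter_preimage_of_deriv_eq_zero hf hf' {f x}).mem_nhds ⟨hx, rfl⟩
  have eventually_const : (fun y ↦ φ (f y)) =ᶠ[𝓝 x] fun _ ↦ φ (f x) := by
    filter_upwards [fiber_mem_nhds] with y hy
    exact congrArg φ hy.2
  exact ((differentiableAt_const _).congr_of_eventuallyEq
    eventually_const).differentiableWithinAt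

theorem hasDerivAt_exp_neg_mul_zero {F g : ℂ → ℂ} {z : ℂ}
    (hF : HasDerivAt F (logDeriv g z) z) (hg : DifferentiableAt ℂ g z) (hgz : g z ≠ 0) :
    HasDerivAt (fun w ↦ Complex.exp (-F w) * g w) 0 z := by
  refine (hF.fun_neg.cexp.fun_mul hg.hasDerivAt).congr_deriv ?_
  rw [logDeriv_apply]
  field_simp
  ring

theorem HolSC.exists_log {U : Set ℂ} (hU : HolSC U) (hUopen : IsOpen U) {g : ℂ → ℂ}
    (hg : DifferentiableOn ℂ g U) (hg₀ : ∀ z ∈ U, g z ≠ 0) :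
    ∃ L : ℂ → ℂ, DifferentiableOn ℂ L U ∧ ∀ z ∈ U, Complex.exp (L z) = g z := by
  obtain ⟨F, hF, hF'⟩ := hU (logDeriv g) ((hg.deriv hUopen).div hg hg₀)
  let c : ℂ → ℂ := fun z ↦ Complex.exp (-F z) * g z
  have hc' : ∀ z ∈ U, HasDerivAt c 0 z := fun z hz ↦
    hasDerivAt_exp_neg_mul_zero (hF' z hz) (hg.differentiableAt (hUopen.mem_nhds hz)) (hg₀ z hz)
  -- `Complex.log` is discontinuous along its cut, but `c` is locally constant.
  have hlogc : DifferentiableOn ℂ (fun z ↦ Complex.log (c z)) U :=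
    differentiableOn_comp_of_deriv_eq_zero hUopen
      (fun z hz ↦ (hc' z hz).differentiableAt.differentiableWithinAt)
      (fun z hz ↦ (hc' z hz).deriv) Complex.log
  refine ⟨fun z ↦ F z + Complex.log (c z), hF.add hlogc, fun z hz ↦ ?_⟩
  have hcz : c z ≠ 0 := mul_ne_zero (Complex.exp_ne_zero _) (hg₀ z hz)
  calc Complex.exp (F z + Complex.log (c z))
      = Complex.exp (F z) * (Complex.exp (-F z) * g z) := by
        rw [Complex.exp_add, Complex.exp_log hcz]
    _ = g z := by rw [← mul_assoc, ← Complex.exp_add, add_neg_cancel, Complex.exp_zero, one_mul]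

theorem norm_exp_lt_one_iff {w : ℂ} : ‖Complex.exp w‖ < 1 ↔ w.re < 0 := by
  rw [Complex.norm_exp, Real.exp_lt_one_iff]

theorem inv_re_neg_iff {w : ℂ} : w⁻¹.re < 0 ↔ w.re < 0 := by
  rcases eq_or_ne w 0 with rfl | hw
  · rw [inv_zero]
  · rw [Complex.inv_re, div_lt_iff₀ (Complex.normSq_pos.mpr hw), zero_mul]

theorem tendsto_inv_zero_of_tendsto_re_atBot {α : Type*} {l : Filter α} {f : α → ℂ}
    (hf : Tendsto (fun x ↦ (f x).re) l atBot) : Tendsto (fun x ↦ (f x)⁻¹) l (𝓝 0) := by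
  have norm_atTop : Tendsto (fun x ↦ ‖f x‖) l atTop :=
    tendsto_atTop_mono (fun x ↦ Complex.abs_re_le_norm (f x)) (tendsto_abs_atBot_atTop.comp hf)
  exact tendsto_inv₀_cobounded.comp (tendsto_norm_atTop_iff_cobounded.mp norm_atTop)

theorem HolSC.exists_re_neg_tendsto_zero {U : Set ℂ} (hU : HolSC U) (hUopen : IsOpen U)
    {g : ℂ → ℂ} (hg : DifferentiableOn ℂ g U) (hg₀ : ∀ z ∈ U, g z ≠ 0)
    (hg₁ : ∀ z ∈ U, ‖g z‖ < 1) :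
    ∃ ψ : ℂ → ℂ, DifferentiableOn ℂ ψ U ∧ (∀ z ∈ U, (ψ z).re < 0) ∧
      ∀ q, Tendsto g (𝓝[U] q) (𝓝 0) → Tendsto ψ (𝓝[U] q) (𝓝 0) := by
  obtain ⟨L, hL, exp_L⟩ := hU.exists_log hUopen hg hg₀
  have hL_re : ∀ z ∈ U, (L z).re < 0 := fun z hz ↦
    norm_exp_lt_one_iff.mp (by rw [exp_L z hz]; exact hg₁ z hz)
  have hL₀ : ∀ z ∈ U, L z ≠ 0 := fun z hz h ↦ (hL_re z hz).ne (by rw [h, Complex.zero_re])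
  refine ⟨fun z ↦ (L z)⁻¹, hL.inv hL₀, fun z hz ↦ inv_re_neg_iff.mpr (hL_re z hz),
    fun q hq ↦ tendsto_inv_zero_of_tendsto_re_atBot ?_⟩
  rw [← Complex.tendsto_exp_nhds_zero_iff]
  exact hq.congr' (eventually_nhdsWithin_of_forall fun z hz ↦ (exp_L z hz).symm)

theorem holSC_weak_barrier_general (U : Set ℂ) (hUopen : IsOpen U)
    (hUbdd : Bornology.IsBounded U) (hU : HolSC U) (q : ℂ) (hq : q ∈ frontier U) :
    ∃ ψ : ℂ → ℂ, DifferentiableOn ℂ ψ U ∧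
      (∀ z ∈ U, (ψ z).re < 0) ∧
      Tendsto (fun z => (ψ z).re) (nhdsWithin q U) (nhds 0) := by
  have hqU : q ∉ U := (disjoint_frontier_iff_isOpen.mpr hUopen).notMem_of_mem_left hq
  obtain ⟨R, hR, hUR⟩ := hUbdd.subset_ball_lt 0 q
  have hR₀ : (R : ℂ) ≠ 0 := Complex.ofReal_ne_zero.mpr hR.ne'
  have scaled_diff : DifferentiableOn ℂ (fun z ↦ (z - q) / R) U := by fun_prop
  have scaled_ne_zero : ∀ z ∈ U, (z - q) / R ≠ 0 := fun z hz ↦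
    div_ne_zero (sub_ne_zero.mpr (ne_of_mem_of_not_mem hz hqU)) hR₀
  have scaled_norm_lt : ∀ z ∈ U, ‖(z - q) / R‖ < 1 := fun z hz ↦ by
    rw [norm_div, Complex.norm_of_nonneg hR.le, div_lt_one hR]
    exact mem_ball_iff_norm.mp (hUR hz)
  have scaled_tendsto : Tendsto (fun z ↦ (z - q) / R) (𝓝[U] q) (𝓝 0) :=
    Continuous.tendsto' (by fun_prop) q 0 (by simp) |>.mono_left nhdsWithin_le_nhds
  obtain ⟨ψ, hψ, hψ_re, hψ_tendsto⟩ :=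
    hU.exists_re_neg_tendsto_zero hUopen scaled_diff scaled_ne_zero scaled_norm_lt
  exact ⟨ψ, hψ, hψ_re, (Complex.continuous_re.tendsto 0).comp (hψ_tendsto q scaled_tendsto)⟩

/-- At each boundary point `q` of a bounded holomorphically simply connected
domain there is a holomorphic function `ψ` on `U` whose real part is negative on
`U` and tends to `0` at `q`; in particular `Re ψ` is a (harmonic) weak barrier
for `U` at `q`. -/
theorem holSC_weak_barrier (U : Set ℂ) (hUopen : IsOpen U) (hUconn : IsConnected U)
    (hUbdd : Bornology.IsBounded U) (hU : HolSC U) (q : ℂ) (hq : q ∈ frontier U) :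
    ∃ ψ : ℂ → ℂ, DifferentiableOn ℂ ψ U ∧
      (∀ z ∈ U, (ψ z).re < 0) ∧
      Tendsto (fun z => (ψ z).re) (nhdsWithin q U) (nhds 0) :=
  holSC_weak_barrier_general U hUopen hUbdd hU q hq
end
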